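/- arXiv:1306.5116 — 10 statements merged into one kernel-verified Lean document; each statement's English description precedes it below -/
import Mathlib

section
/- Assume the matrix A is cofinal. Let e₁e₂e₃⋯ be an infinite path in the directed graph G associated to A. Then for every vertex v ∈ V there exist an index i ∈ ℕ and a finite path μ in G such that s(μ) = v and r(μ) = s(e_i). -/
open scoped ENNReal
open Filter

variable {V : Type*}

/-- The set of vertices of the graph of `A` that emit no edges or infinitely many edges. -/
def VInf (A : V → V → ℝ≥0∞) : Set V :=
  {v | {w | A v w ≠ 0} = ∅ ∨ {w | A v w ≠ 0}.Infinite}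

/-- A set of vertices is hereditary if every edge with source in it has range in it. -/
def Hereditary (A : V → V → ℝ≥0∞) (H : Set V) : Prop :=
  ∀ ⦃v w : V⦄, v ∈ H → A v w ≠ 0 → w ∈ H

/-- A set of vertices is saturated if it contains every finite emitter all of whose
out-neighbours lie in it. -/
def Saturated (A : V → V → ℝ≥0∞) (H : Set V) : Prop :=
  ∀ v : V, v ∉ VInf A → (∀ w, A v w ≠ 0 → w ∈ H) → v ∈ H

/-- `A` is cofinal if the only hereditary and saturated subsets are `∅` and `V`. -/
def Cofinal (A : V → V → ℝ≥0∞) : Prop :=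
  ∀ H : Set V, Hereditary A H → Saturated A H → H = ∅ ∨ H = Set.univ

/-- Matrix powers of `A`, with entries in `[0,∞]`. -/
noncomputable def Apow [DecidableEq V] (A : V → V → ℝ≥0∞) : ℕ → V → V → ℝ≥0∞
  | 0 => fun v w => if v = w then 1 else 0
  | n + 1 => fun v w => ∑' u, A v u * Apow A n u w

/-- `e^β` as an extended nonnegative real. -/
noncomputable def expb (β : ℝ) : ℝ≥0∞ := ENNReal.ofReal (Real.exp β)

/-- `e^{-nβ}` as an extended nonnegative real. -/
noncomputable def expn (β : ℝ) (n : ℕ) : ℝ≥0∞ := ENNReal.ofReal (Real.exp (-(n : ℝ) * β))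

/-- A vector `ξ : V → [0,∞)` is almost `β`-harmonic for `A` if
`∑_w A_{vw} ξ_w = e^β ξ_v` off `V_∞` and `∑_w A_{vw} ξ_w ≤ e^β ξ_v` on `V_∞`. -/
def IsAlmostHarmonic (A : V → V → ℝ≥0∞) (β : ℝ) (ξ : V → ℝ≥0∞) : Prop :=
  (∀ v, ξ v ≠ ⊤) ∧
  (∀ v, v ∉ VInf A → ∑' w, A v w * ξ w = expb β * ξ v) ∧
  (∀ v, v ∈ VInf A → ∑' w, A v w * ξ w ≤ expb β * ξ v)

/-- A vector `ξ : V → [0,∞)` is `β`-harmonic for `A` if `∑_w A_{vw} ξ_w = e^β ξ_v`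
for every vertex `v`. -/
def IsHarmonic (A : V → V → ℝ≥0∞) (β : ℝ) (ξ : V → ℝ≥0∞) : Prop :=
  (∀ v, ξ v ≠ ⊤) ∧ ∀ v, ∑' w, A v w * ξ w = expb β * ξ v

/-- The non-wandering vertices: those admitting a loop of positive length. -/
def NW (A : V → V → ℝ≥0∞) : Set V :=
  {v | Relation.TransGen (fun a b => A a b ≠ 0) v v}

/-- Standing assumptions i)–iii): `A` is cofinal, the graph has no sinks, the entries of
`A` are finite and all powers of `A` have finite entries. -/
def Standing [DecidableEq V] (A : V → V → ℝ≥0∞) : Prop :=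
  Cofinal A ∧ (∀ v, ∃ w, A v w ≠ 0) ∧ (∀ v w, A v w ≠ ⊤) ∧
    ∀ (n : ℕ) (v w : V), Apow A n v w ≠ ⊤

/-- A function `k` supported on `V_∞` is `β`-summable when
`∑_{u ∈ V_∞} ∑_n e^{-nβ} A^n_{uu} k_u < ∞`. -/
def BSummable [DecidableEq V] (A : V → V → ℝ≥0∞) (β : ℝ) (k : V → ℝ≥0∞) : Prop :=
  (∀ u, u ∉ VInf A → k u = 0) ∧ (∑' u, ∑' n, expn β n * Apow A n u u * k u) ≠ ⊤

/-- `k̂_v = ∑_{u ∈ V_∞} ∑_n e^{-nβ} A^n_{vu} k_u` (for `k` supported on `V_∞`). -/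
noncomputable def khat [DecidableEq V] (A : V → V → ℝ≥0∞) (β : ℝ) (k : V → ℝ≥0∞) (v : V) :
    ℝ≥0∞ :=
  ∑' u, ∑' n, expn β n * Apow A n v u * k u

/-- The first-return quantities `r_{vw}(n)`: `r_{vw}(0) = 0`, `r_{vw}(1) = A_{vw}` and
`r_{vw}(n+1) = ∑_{u ≠ w} A_{vu} r_{uw}(n)` for `n ≥ 1`. -/
noncomputable def fr [DecidableEq V] (A : V → V → ℝ≥0∞) (w : V) : ℕ → V → ℝ≥0∞
  | 0 => fun _ => 0
  | 1 => fun v => A v w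
  | n + 2 => fun v => ∑' u, if u = w then 0 else A v u * fr A w (n + 1) u

/-- If `A` is cofinal and `x₀ x₁ x₂ ⋯` is an infinite path in the graph `G` of
`A`, then for every vertex `v` there are an index `i` and a finite path in `G` from `v` to
the `i`-th vertex of the path. -/
theorem stmt0 [Countable V] [DecidableEq V] (A : V → V → ℝ≥0∞)
    (hAfin : ∀ v w, A v w ≠ ⊤) (hco : Cofinal A)
    (x : ℕ → V) (hx : ∀ i, A (x i) (x (i + 1)) ≠ 0) (v : V) :
    ∃ i : ℕ, Relation.ReflTransGen (fun a b => A a b ≠ 0) v (x i) := by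
  have hher : Hereditary A
      {u | ¬ ∃ i, Relation.ReflTransGen (fun a b => A a b ≠ 0) u (x i)} := by
    rintro u w hu huw ⟨i, hi⟩
    exact hu ⟨i, hi.head huw⟩
  have hsat : Saturated A
      {u | ¬ ∃ i, Relation.ReflTransGen (fun a b => A a b ≠ 0) u (x i)} := by
    rintro u - hu ⟨i, hi⟩
    rcases hi.cases_head with rfl | ⟨w, huw, hw⟩
    · exact hu _ (hx i) ⟨i + 1, .refl⟩
    · exact hu w huw ⟨i, hw⟩
  rcases hco _ hher hsat with h | h
  · by_contra hv
    exact (Set.eq_empty_iff_forall_notMem.mp h v) hv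
  · exact ((Set.eq_univ_iff_forall.mp h (x 0)) ⟨0, .refl⟩).elim
end

section
/- Assume the matrix A is cofinal. Then the set NW of non-wandering vertices is a (possibly empty) hereditary subset of V, and the non-wandering subgraph G^NW (with vertex set NW and all edges of G emitted from vertices of NW) is strongly connected: for any pair v, w ∈ NW there is a finite path μ in G with s(μ) = v and r(μ) = w. -/
open scoped ENNReal
open Filter

variable {V : Type*}

/-- In a cofinal graph every non-wandering vertex can be reached from every vertex: the
vertices from which it cannot be reached form a hereditary and saturated set. -/
theorem Cofinal.transGen_of_mem_NW {A : V → V → ℝ≥0∞} (hco : Cofinal A) {w : V}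
    (hw : w ∈ NW A) (v : V) : Relation.TransGen (fun a b => A a b ≠ 0) v w := by
  by_contra hv
  rcases hco {x | ¬ Relation.TransGen (fun a b => A a b ≠ 0) x w}
    (fun x y hx hxy hy => hx (.head hxy hy))
    (fun x _ hx hxw => by
      rcases Relation.TransGen.head'_iff.mp hxw with ⟨y, hxy, hyw⟩
      rcases Relation.reflTransGen_iff_eq_or_transGen.mp hyw with rfl | hyw
      · exact hx _ hxy hw
      · exact hx _ hxy hyw) with h | h
  · exact Set.eq_empty_iff_forall_notMem.mp h v hv
  · exact Set.eq_univ_iff_forall.mp h w hw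

/-- If `A` is cofinal then `NW` is a hereditary subset of `V` and the
non-wandering subgraph is strongly connected: any two vertices of `NW` are joined by a
finite path in `G`. -/
theorem stmt1 [Countable V] [DecidableEq V] (A : V → V → ℝ≥0∞)
    (hAfin : ∀ v w, A v w ≠ ⊤) (hco : Cofinal A) :
    Hereditary A (NW A) ∧
      ∀ v ∈ NW A, ∀ w ∈ NW A, Relation.TransGen (fun a b => A a b ≠ 0) v w := by
  exact ⟨fun v w hv hvw => .tail (hco.transGen_of_mem_NW hv w) hvw,
    fun v _ w hw => hco.transGen_of_mem_NW hw v⟩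
end

section
/- Assume the matrix A is cofinal and let β ∈ ℝ. Let H be a non-empty hereditary subset of V and η : H → [0,∞) a function such that ∑_{w∈H} A_{vw} η_w = e^β η_v for all v ∈ H∖V_∞ and ∑_{w∈H} A_{vw} η_w ≤ e^β η_v for all v ∈ H ∩ V_∞. Then there is a unique almost β-harmonic vector ξ : V → [0,∞) for A with ξ_v = η_v for all v ∈ H. -/
open scoped ENNReal
open Filter

variable {V : Type*}

/-- The saturation of `H`: the closure of `H` under adding finite emitters all of whose
out-neighbours have already been added. -/
inductive InSaturation (A : V → V → ℝ≥0∞) (H : Set V) : V → Prop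
  | base (v : V) (hv : v ∈ H) : InSaturation A H v
  | step (v : V) (hv : v ∉ VInf A) (h : ∀ w, A v w ≠ 0 → InSaturation A H w) :
      InSaturation A H v

/-- If `A` is cofinal, the saturation of a non-empty hereditary set is everything. -/
theorem Cofinal.inSaturation {A : V → V → ℝ≥0∞} (hco : Cofinal A) {H : Set V}
    (hne : H.Nonempty) (hH : Hereditary A H) (v : V) : InSaturation A H v := by
  have hher : Hereditary A {v | InSaturation A H v} := by
    rintro v w (⟨_, hv⟩ | ⟨_, _, h⟩) hvw
    · exact .base w (hH hv hvw)
    · exact h w hvw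
  rcases hco _ hher fun v hv h => InSaturation.step v hv h with h | h
  · obtain ⟨x, hx⟩ := hne
    exact absurd (show x ∈ {v | InSaturation A H v} from .base x hx) (by simp [h])
  · exact h.ge (Set.mem_univ v)

/-- The edge relation restricted to sources outside `H` is well-founded when the saturation of
`H` is everything. -/
theorem wellFounded_edge_outside {A : V → V → ℝ≥0∞} {H : Set V}
    (hsat : ∀ v, InSaturation A H v) : WellFounded fun w v => v ∉ H ∧ A v w ≠ 0 := by
  refine ⟨fun v => ?_⟩
  induction hsat v with
  | base v hv => exact ⟨v, fun _ h => absurd hv h.1⟩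
  | step v _ _ ih => exact ⟨v, fun w h => ih w h.2⟩

theorem expb_ne_zero (β : ℝ) : expb β ≠ 0 := by
  simp [expb, Real.exp_pos]

theorem expb_ne_top (β : ℝ) : expb β ≠ ⊤ := ENNReal.ofReal_ne_top

/-- Over a hereditary set, row sums only see the entries inside the set. -/
theorem Hereditary.tsum_eq {A : V → V → ℝ≥0∞} {H : Set V} (hH : Hereditary A H)
    {v : V} (hv : v ∈ H) {ξ η : V → ℝ≥0∞} (h : ∀ w ∈ H, ξ w = η w) :
    ∑' w, A v w * ξ w = ∑' w : H, A v (w : V) * η (w : V) := by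
  rw [← tsum_subtype_eq_of_support_subset (s := H)]
  · exact tsum_congr fun w => by rw [h w w.2]
  · intro w hw
    exact hH hv (left_ne_zero_of_mul hw)

/-- Row sums over a finite emitter are finite when the entries and the vector are finite on the
out-neighbours. -/
theorem tsum_mul_ne_top {A : V → V → ℝ≥0∞} (hAfin : ∀ v w, A v w ≠ ⊤) {v : V}
    (hv : v ∉ VInf A) {ξ : V → ℝ≥0∞} (hξ : ∀ w, A v w ≠ 0 → ξ w ≠ ⊤) :
    ∑' w, A v w * ξ w ≠ ⊤ := by
  have hfin : {w | A v w ≠ 0}.Finite := Set.not_infinite.1 fun h => hv (Or.inr h)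
  rw [tsum_eq_sum (s := hfin.toFinset) fun w hw => by
    rw [Set.Finite.mem_toFinset] at hw
    simp [not_not.1 hw]]
  exact ENNReal.sum_ne_top.2 fun w hw =>
    ENNReal.mul_ne_top (hAfin v w) (hξ w (by simpa using hw))

/-- A function on `H` extends to `V` so that the harmonicity equation holds off `H`. -/
theorem exists_extension {A : V → V → ℝ≥0∞} {H : Set V}
    (hwf : WellFounded fun w v => v ∉ H ∧ A v w ≠ 0) (β : ℝ) (η : V → ℝ≥0∞) :
    ∃ ξ : V → ℝ≥0∞, (∀ v ∈ H, ξ v = η v) ∧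
      ∀ v ∉ H, ∑' w, A v w * ξ w = expb β * ξ v := by
  classical
  let F : ∀ v, (∀ w, (v ∉ H ∧ A v w ≠ 0) → ℝ≥0∞) → ℝ≥0∞ := fun v f =>
    if v ∈ H then η v
    else (expb β)⁻¹ * ∑' w, A v w * if h : v ∉ H ∧ A v w ≠ 0 then f w h else 0
  refine ⟨hwf.fix F, fun v hv => ?_, fun v hv => ?_⟩
  · rw [hwf.fix_eq]
    exact if_pos hv
  · conv_rhs => rw [hwf.fix_eq]
    rw [show F v _ = _ from if_neg hv, ← mul_assoc,
      ENNReal.mul_inv_cancel (expb_ne_zero β) (expb_ne_top β), one_mul]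
    refine tsum_congr fun w => ?_
    by_cases hw : A v w = 0
    · simp [hw]
    · rw [dif_pos ⟨hv, hw⟩]

/-- If `A` is cofinal, `H` is a non-empty hereditary subset of `V` and
`η : H → [0,∞)` satisfies the (almost) harmonicity conditions on `H`, then there is a
unique almost `β`-harmonic vector for `A` extending `η`. -/
theorem stmt2 [Countable V] [DecidableEq V] (A : V → V → ℝ≥0∞)
    (hAfin : ∀ v w, A v w ≠ ⊤) (hco : Cofinal A) (β : ℝ)
    (H : Set V) (hne : H.Nonempty) (hH : Hereditary A H)
    (η : V → ℝ≥0∞) (hηfin : ∀ v ∈ H, η v ≠ ⊤)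
    (hη1 : ∀ v ∈ H, v ∉ VInf A → ∑' w : H, A v (w : V) * η (w : V) = expb β * η v)
    (hη2 : ∀ v ∈ H, v ∈ VInf A → ∑' w : H, A v (w : V) * η (w : V) ≤ expb β * η v) :
    ∃! ξ : V → ℝ≥0∞, IsAlmostHarmonic A β ξ ∧ ∀ v ∈ H, ξ v = η v := by
  have hsat := hco.inSaturation hne hH
  obtain ⟨ξ, hξH, hξ⟩ := exists_extension (wellFounded_edge_outside hsat) β η
  refine ⟨ξ, ⟨⟨fun v => ?_, fun v hv => ?_, fun v hv => ?_⟩, hξH⟩, ?_⟩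
  · induction hsat v with
    | base v hv => exact hξH v hv ▸ hηfin v hv
    | step v hv _ ih =>
      by_cases hvH : v ∈ H
      · exact hξH v hvH ▸ hηfin v hvH
      · intro htop
        refine tsum_mul_ne_top hAfin hv ih ?_
        rw [hξ v hvH, htop, ENNReal.mul_top (expb_ne_zero β)]
  · by_cases hvH : v ∈ H
    · rw [hH.tsum_eq hvH hξH, hη1 v hvH hv, hξH v hvH]
    · exact hξ v hvH
  · by_cases hvH : v ∈ H
    · rw [hH.tsum_eq hvH hξH, hξH v hvH]
      exact hη2 v hvH hv
    · exact (hξ v hvH).le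
  · rintro ζ ⟨⟨_, hζ, _⟩, hζH⟩
    funext v
    induction hsat v with
    | base v hv => rw [hζH v hv, hξH v hv]
    | step v hv _ ih =>
      by_cases hvH : v ∈ H
      · rw [hζH v hvH, hξH v hvH]
      · refine (ENNReal.mul_right_inj (expb_ne_zero β) (expb_ne_top β)).1 ?_
        rw [← hζ v hv, ← hξ v hvH]
        refine tsum_congr fun w => ?_
        by_cases hw : A v w = 0
        · simp [hw]
        · rw [ih w hw]
end

section
/- Assume the matrix A is cofinal and that the graph G contains a sink, i.e. a vertex emitting no edges (equivalently, A has a zero row). Then for every β ∈ ℝ there exists a non-zero almost β-harmonic vector for A, and it is unique up to multiplication by non-negative scalars. -/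
open scoped ENNReal
open Filter

variable {V : Type*}

/-- The smallest saturated set containing the vertex `s`. -/
inductive SaturationOf (A : V → V → ℝ≥0∞) (s : V) : V → Prop
  | base : SaturationOf A s s
  | step (v : V) : v ∉ VInf A → (∀ w, A v w ≠ 0 → SaturationOf A s w) → SaturationOf A s v

/-- In a cofinal graph with a sink `s`, every vertex lies in the saturation of `s`. -/
theorem Cofinal.saturationOf_sink {A : V → V → ℝ≥0∞} (hco : Cofinal A) {s : V}
    (hs : ∀ w, A s w = 0) (v : V) : SaturationOf A s v := by
  have hher : Hereditary A {v | SaturationOf A s v} := by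
    intro v w hv hvw
    cases hv with
    | base => exact absurd (hs w) hvw
    | step _ _ h => exact h w hvw
  rcases hco _ hher (fun v hv h => SaturationOf.step v hv h) with h | h
  · have hmem : s ∈ {v | SaturationOf A s v} := SaturationOf.base
    simp [h] at hmem
  · exact Set.eq_univ_iff_forall.mp h v

theorem expn_zero (β : ℝ) : expn β 0 = 1 := by
  simp [expn]

theorem expn_succ (β : ℝ) (n : ℕ) : expn β (n + 1) = (expb β)⁻¹ * expn β n := by
  rw [expb, expn, expn, ← ENNReal.ofReal_inv_of_pos (Real.exp_pos β), ← Real.exp_neg,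
    ← ENNReal.ofReal_mul (Real.exp_pos _).le, ← Real.exp_add]
  congr 2
  push_cast
  ring

/-- The Green function `∑_n e^{-nβ} A^n_{vs}` of `A` with pole `s`. -/
noncomputable def green [DecidableEq V] (A : V → V → ℝ≥0∞) (β : ℝ) (s v : V) : ℝ≥0∞ :=
  ∑' n, expn β n * Apow A n v s

theorem green_eq [DecidableEq V] (A : V → V → ℝ≥0∞) (β : ℝ) (s v : V) :
    green A β s v = (if v = s then 1 else 0) + (expb β)⁻¹ * ∑' w, A v w * green A β s w := by
  rw [green, tsum_eq_zero_add' ENNReal.summable, expn_zero, one_mul]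
  congr 1
  simp only [green, ← ENNReal.tsum_mul_left, Apow, expn_succ]
  rw [ENNReal.tsum_comm]
  refine tsum_congr fun w => tsum_congr fun n => ?_
  ring

theorem finite_support_of_notMem_VInf {A : V → V → ℝ≥0∞} {v : V} (hv : v ∉ VInf A) :
    {w | A v w ≠ 0}.Finite := by
  by_contra h
  exact hv (Or.inr h)

theorem mem_VInf_of_sink {A : V → V → ℝ≥0∞} {s : V} (hs : ∀ w, A s w = 0) : s ∈ VInf A :=
  Or.inl (by simp [hs])

theorem green_sink [DecidableEq V] {A : V → V → ℝ≥0∞} {s : V} (hs : ∀ w, A s w = 0) (β : ℝ) :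
    green A β s s = 1 := by
  rw [green_eq]
  simp [hs]

theorem tsum_mul_green [DecidableEq V] (A : V → V → ℝ≥0∞) (β : ℝ) {s v : V} (hv : v ≠ s) :
    ∑' w, A v w * green A β s w = expb β * green A β s v := by
  rw [green_eq A β s v, if_neg hv, zero_add, ← mul_assoc,
    ENNReal.mul_inv_cancel (expb_ne_zero β) (expb_ne_top β), one_mul]

theorem green_ne_top [DecidableEq V] {A : V → V → ℝ≥0∞} (hAfin : ∀ v w, A v w ≠ ⊤) {s : V}
    (hs : ∀ w, A s w = 0) (β : ℝ) {v : V} (hv : SaturationOf A s v) : green A β s v ≠ ⊤ := by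
  induction hv with
  | base => simp [green_sink hs]
  | step v hv _ ih =>
    have hvs : v ≠ s := fun h => hv (h ▸ mem_VInf_of_sink hs)
    rw [green_eq, if_neg hvs, zero_add]
    refine ENNReal.mul_ne_top (ENNReal.inv_ne_top.mpr (expb_ne_zero β)) ?_
    rw [tsum_eq_sum (s := (finite_support_of_notMem_VInf hv).toFinset)
      (fun w hw => by
        have hw0 : A v w = 0 := by simpa using hw
        rw [hw0, zero_mul])]
    refine ENNReal.sum_ne_top.mpr fun w hw => ENNReal.mul_ne_top (hAfin v w) (ih w ?_)
    simpa using hw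

theorem IsAlmostHarmonic.eq_mul_green [DecidableEq V] {A : V → V → ℝ≥0∞} {β : ℝ}
    {ξ : V → ℝ≥0∞} (hξ : IsAlmostHarmonic A β ξ) {s : V} (hs : ∀ w, A s w = 0) {v : V}
    (hv : SaturationOf A s v) : ξ v = ξ s * green A β s v := by
  induction hv with
  | base => rw [green_sink hs, mul_one]
  | step v hv _ ih =>
    have hvs : v ≠ s := fun h => hv (h ▸ mem_VInf_of_sink hs)
    refine (ENNReal.mul_right_inj (expb_ne_zero β) (expb_ne_top β)).mp ?_
    rw [← hξ.2.1 v hv, mul_left_comm, ← tsum_mul_green A β hvs, ← ENNReal.tsum_mul_left]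
    refine tsum_congr fun w => ?_
    by_cases hw : A v w = 0
    · simp [hw]
    · rw [ih w hw, mul_left_comm]

/-- If `A` is cofinal and `G` contains a sink (a zero row of `A`), then for
every `β ∈ ℝ` there is a non-zero almost `β`-harmonic vector for `A`, unique up to
multiplication by non-negative scalars. -/
theorem stmt3 [Countable V] [DecidableEq V] (A : V → V → ℝ≥0∞)
    (hAfin : ∀ v w, A v w ≠ ⊤) (hco : Cofinal A)
    (hsink : ∃ s : V, ∀ w, A s w = 0) :
    ∀ β : ℝ, ∃ ξ : V → ℝ≥0∞, (IsAlmostHarmonic A β ξ ∧ ξ ≠ 0) ∧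
      ∀ ξ' : V → ℝ≥0∞, IsAlmostHarmonic A β ξ' → ξ' ≠ 0 →
        ∃ c : ℝ≥0∞, c ≠ ⊤ ∧ ∀ v, ξ' v = c * ξ v := by
  intro β
  obtain ⟨s, hs⟩ := hsink
  have hsat := hco.saturationOf_sink hs
  refine ⟨green A β s, ⟨⟨fun v => green_ne_top hAfin hs β (hsat v), fun v hv => ?_,
    fun v _ => ?_⟩, fun h => ?_⟩,
    fun ξ' hξ' _ => ⟨ξ' s, hξ'.1 s, fun v => hξ'.eq_mul_green hs (hsat v)⟩⟩
  · exact tsum_mul_green A β fun h => hv (h ▸ mem_VInf_of_sink hs)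
  · by_cases hvs : v = s
    · simp [hvs, hs]
    · exact (tsum_mul_green A β hvs).le
  · simpa [green_sink hs] using congrFun h s
end

section
/- Assume the matrix A is cofinal and let β ∈ ℝ. If ξ is a non-zero almost β-harmonic vector for A, then ξ_v > 0 for all v ∈ V. -/
open scoped ENNReal
open Filter

variable {V : Type*}

/-- The zero set of an almost harmonic vector is hereditary. -/
theorem IsAlmostHarmonic.hereditary_zeros {A : V → V → ℝ≥0∞} {β : ℝ} {ξ : V → ℝ≥0∞}
    (hξ : IsAlmostHarmonic A β ξ) : Hereditary A {v | ξ v = 0} := by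
  intro v w hv hvw
  have hv : ξ v = 0 := hv
  have hle : ∑' w, A v w * ξ w ≤ expb β * ξ v := by
    by_cases h : v ∈ VInf A
    · exact hξ.2.2 v h
    · exact (hξ.2.1 v h).le
  rw [hv, mul_zero, nonpos_iff_eq_zero, ENNReal.tsum_eq_zero] at hle
  exact (mul_eq_zero.mp (hle w)).resolve_left hvw

/-- The zero set of an almost harmonic vector is saturated. -/
theorem IsAlmostHarmonic.saturated_zeros {A : V → V → ℝ≥0∞} {β : ℝ} {ξ : V → ℝ≥0∞}
    (hξ : IsAlmostHarmonic A β ξ) : Saturated A {v | ξ v = 0} := by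
  intro v hv hzero
  have hsum : ∑' w, A v w * ξ w = 0 := ENNReal.tsum_eq_zero.mpr fun w =>
    mul_eq_zero.mpr (or_iff_not_imp_left.mpr (hzero w))
  rw [hξ.2.1 v hv] at hsum
  exact (mul_eq_zero.mp hsum).resolve_left
    (pos_iff_ne_zero.mp (ENNReal.ofReal_pos.mpr (Real.exp_pos β)))

/-- If `A` is cofinal and `ξ` is a non-zero almost `β`-harmonic vector for
`A`, then `ξ_v > 0` for every vertex `v`. -/
theorem stmt4 [Countable V] [DecidableEq V] (A : V → V → ℝ≥0∞)
    (hAfin : ∀ v w, A v w ≠ ⊤) (hco : Cofinal A) (β : ℝ)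
    (ξ : V → ℝ≥0∞) (hξ : IsAlmostHarmonic A β ξ) (hne : ξ ≠ 0) :
    ∀ v, 0 < ξ v := by
  intro v
  rcases hco _ hξ.hereditary_zeros hξ.saturated_zeros with h | h
  · exact pos_iff_ne_zero.mpr fun hv => (Set.eq_empty_iff_forall_notMem.mp h v) hv
  · exact absurd (funext fun w => Set.eq_univ_iff_forall.mp h w) hne
end

section
/- Assume the matrix A is cofinal and let β ∈ ℝ. If there exists a non-zero almost β-harmonic vector for A, then A^n_{vw} < ∞ for all n ∈ ℕ and all v, w ∈ V. -/
open scoped ENNReal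
open Filter

variable {V : Type*}

namespace IsAlmostHarmonic

variable {A : V → V → ℝ≥0∞} {β : ℝ} {ξ : V → ℝ≥0∞}

theorem tsum_le (h : IsAlmostHarmonic A β ξ) (v : V) :
    ∑' w, A v w * ξ w ≤ expb β * ξ v := by
  by_cases hv : v ∈ VInf A
  · exact h.2.2 v hv
  · exact (h.2.1 v hv).le

theorem hereditary_zeros_s5 (h : IsAlmostHarmonic A β ξ) : Hereditary A {v | ξ v = 0} := by
  intro v w hv hvw
  have hle : A v w * ξ w ≤ expb β * ξ v :=
    (ENNReal.le_tsum (f := fun w => A v w * ξ w) w).trans (h.tsum_le v)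
  rw [Set.mem_ofPred_eq.mp hv, mul_zero, nonpos_iff_eq_zero, mul_eq_zero] at hle
  exact hle.resolve_left hvw

theorem saturated_zeros_s5 (h : IsAlmostHarmonic A β ξ) : Saturated A {v | ξ v = 0} := by
  intro v hv hw
  have hsum : ∑' w, A v w * ξ w = 0 := by
    refine ENNReal.tsum_eq_zero.mpr fun w => ?_
    by_cases hvw : A v w = 0
    · rw [hvw, zero_mul]
    · rw [Set.mem_ofPred_eq.mp (hw w hvw), mul_zero]
  rw [h.2.1 v hv, mul_eq_zero] at hsum
  exact hsum.resolve_left (ENNReal.ofReal_pos.mpr (Real.exp_pos β)).ne'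

/-- For cofinal `A`, a non-zero almost harmonic vector is strictly positive. -/
theorem apply_ne_zero (h : IsAlmostHarmonic A β ξ) (hco : Cofinal A) (hξ : ξ ≠ 0) (v : V) :
    ξ v ≠ 0 := by
  rcases hco _ h.hereditary_zeros_s5 h.saturated_zeros_s5 with hH | hH
  · exact fun hv => Set.eq_empty_iff_forall_notMem.mp hH v hv
  · exact absurd (funext fun w => Set.eq_univ_iff_forall.mp hH w) hξ

theorem apow_mul_le [DecidableEq V] (h : IsAlmostHarmonic A β ξ) (n : ℕ) (v w : V) :
    Apow A n v w * ξ w ≤ expb β ^ n * ξ v := by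
  induction n generalizing v with
  | zero =>
    by_cases hvw : v = w <;> simp [Apow, hvw]
  | succ n ih =>
    calc Apow A (n + 1) v w * ξ w = ∑' u, A v u * (Apow A n u w * ξ w) := by
          simp only [Apow, ← ENNReal.tsum_mul_right, mul_assoc]
      _ ≤ ∑' u, A v u * (expb β ^ n * ξ u) :=
          ENNReal.tsum_le_tsum fun u => mul_le_mul_right (ih u) _
      _ = expb β ^ n * ∑' u, A v u * ξ u := by
          simp only [← ENNReal.tsum_mul_left, mul_left_comm]
      _ ≤ expb β ^ n * (expb β * ξ v) := mul_le_mul_right (h.tsum_le v) _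
      _ = expb β ^ (n + 1) * ξ v := by rw [pow_succ, mul_assoc]

end IsAlmostHarmonic

/-- If `A` is cofinal and there is a non-zero almost `β`-harmonic vector for
`A`, then all entries of all powers of `A` are finite. -/
theorem stmt5 [Countable V] [DecidableEq V] (A : V → V → ℝ≥0∞)
    (hAfin : ∀ v w, A v w ≠ ⊤) (hco : Cofinal A) (β : ℝ)
    (hξ : ∃ ξ : V → ℝ≥0∞, IsAlmostHarmonic A β ξ ∧ ξ ≠ 0) :
    ∀ (n : ℕ) (v w : V), Apow A n v w ≠ ⊤ := by
  obtain ⟨ξ, h, hne⟩ := hξ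
  intro n v w htop
  have hle := h.apow_mul_le n v w
  rw [htop, ENNReal.top_mul (h.apply_ne_zero hco hne w), top_le_iff] at hle
  exact ENNReal.mul_ne_top (ENNReal.pow_ne_top ENNReal.ofReal_ne_top) (h.1 v) hle
end

section
/- Assume the matrix A is cofinal. Then no vertex of V that fails to be non-wandering is an infinite emitter; that is, every vertex of V emitting infinitely many edges lies in NW. -/
open scoped ENNReal
open Filter

variable {V : Type*}

/-- The saturation of a set `S` of vertices: the smallest saturated set containing `S`. -/
inductive Saturation (A : V → V → ℝ≥0∞) (S : Set V) : V → Prop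
  | of_mem {v : V} : v ∈ S → Saturation A S v
  | step {v : V} : v ∉ VInf A → (∀ w, A v w ≠ 0 → Saturation A S w) → Saturation A S v

theorem saturated_saturation (A : V → V → ℝ≥0∞) (S : Set V) :
    Saturated A {v | Saturation A S v} :=
  fun _ hv h => Saturation.step hv h

theorem Hereditary.saturation {A : V → V → ℝ≥0∞} {S : Set V} (hS : Hereditary A S) :
    Hereditary A {v | Saturation A S v} := by
  intro v w hv hvw
  cases hv with
  | of_mem h => exact .of_mem (hS h hvw)
  | step _ h => exact h w hvw

theorem hereditary_setOf_transGen (A : V → V → ℝ≥0∞) (v : V) :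
    Hereditary A {w | Relation.TransGen (fun a b => A a b ≠ 0) v w} :=
  fun _ _ h hw => h.tail hw

/-- If `A` is cofinal then every infinite emitter is non-wandering, i.e.
every vertex emitting infinitely many edges lies in `NW`. -/
theorem stmt6 [Countable V] [DecidableEq V] (A : V → V → ℝ≥0∞)
    (hAfin : ∀ v w, A v w ≠ ⊤) (hco : Cofinal A) :
    ∀ v : V, {w | A v w ≠ 0}.Infinite → v ∈ NW A := by
  intro v hv
  obtain ⟨w, hw⟩ := hv.nonempty
  have hH := (hereditary_setOf_transGen A v).saturation
  rcases hco _ hH (saturated_saturation A _) with h | h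
  · exact absurd (Saturation.of_mem (.single hw)) (Set.eq_empty_iff_forall_notMem.mp h w)
  · cases Set.eq_univ_iff_forall.mp h v with
    | of_mem h => exact h
    | step h _ => exact absurd (Or.inr hv) h
end

section
/- Assume the standing assumptions and let β ∈ ℝ. If there are vertices v₀, w₀ ∈ V such that ∑_{n=0}^∞ A^n_{v₀w₀} e^{-nβ} = ∞, then ∑_{n=0}^∞ A^n_{vw₀} e^{-nβ} = ∞ for all vertices v ∈ V. -/
open scoped ENNReal
open Filter

variable {V : Type*}

/-- The Green function `v ↦ ∑_n A^n_{vw} e^{-nβ}` satisfies the resolvent equation. -/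
theorem tsum_Apow_mul_expn [DecidableEq V] (A : V → V → ℝ≥0∞) (β : ℝ) (v w : V) :
    ∑' n : ℕ, Apow A n v w * expn β n =
      (if v = w then 1 else 0) +
        expn β 1 * ∑' u, A v u * ∑' n : ℕ, Apow A n u w * expn β n := by
  have expn_succ (n : ℕ) : expn β (n + 1) = expn β 1 * expn β n := by
    unfold expn
    rw [← ENNReal.ofReal_mul (Real.exp_nonneg _), ← Real.exp_add]
    congr 2
    push_cast
    ring
  rw [tsum_eq_zero_add' ENNReal.summable]
  congr 1
  · simp [Apow, expn]
  · simp only [Apow, ← ENNReal.tsum_mul_left, ← ENNReal.tsum_mul_right]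
    rw [ENNReal.tsum_comm]
    refine tsum_congr fun u => tsum_congr fun n => ?_
    rw [expn_succ]
    ring

/-- Under the standing assumptions, if `∑_n A^n_{v₀w₀} e^{-nβ} = ∞` for some
vertices `v₀, w₀`, then `∑_n A^n_{vw₀} e^{-nβ} = ∞` for every vertex `v`. -/
theorem stmt7 [Countable V] [DecidableEq V] (A : V → V → ℝ≥0∞)
    (hst : Standing A) (β : ℝ) (v₀ w₀ : V)
    (h : ∑' n : ℕ, Apow A n v₀ w₀ * expn β n = ⊤) :
    ∀ v : V, ∑' n : ℕ, Apow A n v w₀ * expn β n = ⊤ := by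
  obtain ⟨hcof, -, hfin, -⟩ := hst
  have hexp : expn β 1 ≠ 0 := by simp [expn, Real.exp_pos]
  have hexp_top : expn β 1 ≠ ⊤ := ENNReal.ofReal_ne_top
  have hher : Hereditary A {v | ∑' n : ℕ, Apow A n v w₀ * expn β n ≠ ⊤} := by
    intro v u hv hvu hu
    refine hv ?_
    rw [tsum_Apow_mul_expn, ENNReal.add_eq_top]
    refine Or.inr (ENNReal.mul_eq_top.2 (Or.inl ⟨hexp, ?_⟩))
    exact ENNReal.tsum_eq_top_of_eq_top ⟨u, by rw [hu, ENNReal.mul_top hvu]⟩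
  have hsat : Saturated A {v | ∑' n : ℕ, Apow A n v w₀ * expn β n ≠ ⊤} := by
    intro v hv hsucc
    have hsupp : {u | A v u ≠ 0}.Finite :=
      Set.not_infinite.1 fun hinf => hv (Or.inr hinf)
    rw [Set.mem_ofPred_eq, tsum_Apow_mul_expn,
      tsum_eq_sum (s := hsupp.toFinset) fun u hu => by simp_all]
    refine ENNReal.add_ne_top.2 ⟨by split_ifs <;> simp, ENNReal.mul_ne_top hexp_top ?_⟩
    refine ENNReal.sum_ne_top.2 fun u hu => ENNReal.mul_ne_top (hfin v u) (hsucc u ?_)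
    simpa using hu
  rcases hcof _ hher hsat with hH | hH
  · intro v
    by_contra hv
    exact Set.eq_empty_iff_forall_notMem.1 hH v hv
  · exact absurd h (Set.eq_univ_iff_forall.1 hH v₀)
end

section
/- Assume the standing assumptions and that A is recurrent. Then there exists a non-zero almost β₀-harmonic vector for A; it is unique up to multiplication by non-negative scalars; and it is β₀-harmonic for A. -/
open scoped ENNReal
open Filter

variable {V : Type*}

section FirstReturn

variable [DecidableEq V] {A : V → V → ℝ≥0∞}

/-- The generating function `∑_n r_{vo}(n) t^n` of the first-return quantities. -/
noncomputable def frSeries (A : V → V → ℝ≥0∞) (o : V) (t : ℝ≥0∞) (v : V) : ℝ≥0∞ :=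
  ∑' n, fr A o (n + 1) v * t ^ (n + 1)

/-- Decomposition of a path from `v` to `o` at its first visit to `o` at a positive time. -/
theorem Apow_succ_eq_sum_antidiagonal (A : V → V → ℝ≥0∞) (o : V) (n : ℕ) (v : V) :
    Apow A (n + 1) v o =
      ∑ p ∈ Finset.HasAntidiagonal.antidiagonal n, fr A o (p.1 + 1) v * Apow A p.2 o o := by
  induction n generalizing v with
  | zero => simp [Apow, fr]
  | succ n ih =>
    rw [Finset.Nat.antidiagonal_succ, Finset.sum_cons, Finset.sum_map]
    change ∑' u, A v u * Apow A (n + 1) u o = A v o * Apow A (n + 1) o o +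
      ∑ p ∈ Finset.HasAntidiagonal.antidiagonal n,
        (∑' u, if u = o then 0 else A v u * fr A o (p.1 + 1) u) * Apow A p.2 o o
    rw [ENNReal.tsum_eq_add_tsum_ite o]
    congr 1
    simp_rw [← ENNReal.tsum_mul_right]
    rw [← Summable.tsum_finsetSum fun _ _ => ENNReal.summable]
    refine tsum_congr fun u => ?_
    split_ifs with h
    · simp
    · rw [ih, Finset.mul_sum]
      exact Finset.sum_congr rfl fun p _ => (mul_assoc _ _ _).symm

theorem tsum_Apow_renewal (A : V → V → ℝ≥0∞) (o : V) (t : ℝ≥0∞) :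
    ∑' n, Apow A n o o * t ^ n =
      1 + frSeries A o t o * ∑' n, Apow A n o o * t ^ n := by
  conv_lhs => rw [tsum_eq_zero_add' ENNReal.summable]
  congr 1
  · simp [Apow]
  · simp_rw [frSeries, ← ENNReal.tsum_mul_right, ← ENNReal.tsum_mul_left]
    rw [← ENNReal.tsum_prod (f := fun i j =>
        fr A o (i + 1) o * t ^ (i + 1) * (Apow A j o o * t ^ j)),
      ← Finset.HasAntidiagonal.sigmaAntidiagonalEquivProd.tsum_eq, ENNReal.tsum_sigma']
    refine tsum_congr fun n => ?_
    rw [tsum_fintype, Apow_succ_eq_sum_antidiagonal, Finset.sum_mul,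
      ← Finset.sum_coe_sort (Finset.HasAntidiagonal.antidiagonal n)]
    refine Finset.sum_congr rfl fun p _ => ?_
    have hp : p.1.1 + p.1.2 = n := Finset.HasAntidiagonal.mem_antidiagonal.mp p.2
    simp only [Finset.HasAntidiagonal.sigmaAntidiagonalEquivProd_apply]
    rw [show t ^ (n + 1) = t ^ (p.1.1 + p.1.2 + 1) by rw [hp]]
    ring

theorem frSeries_eq (A : V → V → ℝ≥0∞) (o : V) (t : ℝ≥0∞) (v : V) :
    frSeries A o t v =
      t * (A v o + ∑' u, if u = o then 0 else A v u * frSeries A o t u) := by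
  conv_lhs => rw [frSeries, tsum_eq_zero_add' ENNReal.summable]
  rw [mul_add]
  congr 1
  · simp [fr, mul_comm]
  · change ∑' n, (∑' u, if u = o then 0 else A v u * fr A o (n + 1) u) * t ^ (n + 1 + 1) = _
    simp_rw [← ENNReal.tsum_mul_right]
    rw [ENNReal.tsum_comm, ← ENNReal.tsum_mul_left]
    refine tsum_congr fun u => ?_
    split_ifs with h
    · simp
    · rw [frSeries, ← ENNReal.tsum_mul_left, ← ENNReal.tsum_mul_left]
      exact tsum_congr fun n => by ring

/-- A power series with finite non-negative coefficients is left lower semicontinuous. -/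
theorem exists_lt_lt_tsum_mul_pow {a : ℕ → ℝ≥0∞} (ha : ∀ n, a n ≠ ⊤) {q c : ℝ≥0∞}
    (hq : q ≠ 0) (m : ℕ → ℕ) (hc : c < ∑' n, a n * q ^ m n) :
    ∃ t < q, c < ∑' n, a n * t ^ m n := by
  rw [ENNReal.tsum_eq_iSup_sum, lt_iSup_iff] at hc
  obtain ⟨s, hs⟩ := hc
  have hcont : Continuous fun t : ℝ≥0∞ => ∑ n ∈ s, a n * t ^ m n :=
    continuous_finsetSum _ fun n _ =>
      (ENNReal.continuous_const_mul (ha n)).comp (ENNReal.continuous_pow (m n))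
  have : (nhdsWithin q (Set.Iio q)).NeBot :=
    nhdsLT_neBot_of_exists_lt ⟨0, pos_iff_ne_zero.mpr hq⟩
  obtain ⟨t, ht, htq⟩ := (((hcont.tendsto q).eventually (lt_mem_nhds hs)).filter_mono
    nhdsWithin_le_nhds |>.and (self_mem_nhdsWithin (s := Set.Iio q))).exists
  exact ⟨t, htq, ht.trans_le (ENNReal.sum_le_tsum s)⟩

/-- The root test, for power series inside the disc of convergence. -/
theorem tsum_mul_pow_ne_top_of_limsup_lt {a : ℕ → ℝ≥0∞} (ha : ∀ n, a n ≠ ⊤) {t : ℝ≥0∞}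
    (ht : limsup (fun n : ℕ => a n ^ ((n : ℝ)⁻¹)) atTop < t⁻¹) (ht' : t ≠ ⊤) :
    ∑' n, a n * t ^ n ≠ ⊤ := by
  obtain ⟨r, hr, hrt⟩ := exists_between ht
  have hrt1 : r * t < 1 := by
    rcases eq_or_ne t 0 with rfl | h0
    · simp
    · calc r * t < t⁻¹ * t := (ENNReal.mul_lt_mul_iff_left h0 ht').mpr hrt
        _ = 1 := ENNReal.inv_mul_cancel h0 ht'
  obtain ⟨N, hN⟩ := eventually_atTop.mp (eventually_lt_of_limsup_lt hr)
  rw [← ENNReal.summable.sum_add_tsum_nat_add' (k := N + 1)]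
  refine ENNReal.add_ne_top.mpr ⟨ENNReal.sum_ne_top.mpr fun n _ =>
    ENNReal.mul_ne_top (ha n) (ENNReal.pow_ne_top ht'), ?_⟩
  have hle : ∀ n, a (n + (N + 1)) * t ^ (n + (N + 1)) ≤ (r * t) ^ n := by
    intro n
    have h1 : a (n + (N + 1)) ≤ r ^ (n + (N + 1)) := by
      have h := (hN (n + (N + 1)) (by omega)).le
      rw [ENNReal.rpow_inv_le_iff (by positivity), ENNReal.rpow_natCast] at h
      exact h
    calc a (n + (N + 1)) * t ^ (n + (N + 1)) ≤ r ^ (n + (N + 1)) * t ^ (n + (N + 1)) := by gcongr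
      _ = (r * t) ^ (n + (N + 1)) := (mul_pow _ _ _).symm
      _ ≤ (r * t) ^ n := pow_le_pow_right_of_le_one' hrt1.le (by omega)
  refine ne_top_of_le_ne_top ?_ (ENNReal.tsum_le_tsum hle)
  rw [ENNReal.tsum_geometric]
  exact ENNReal.inv_ne_top.mpr (tsub_pos_of_lt hrt1).ne'

theorem fr_succ_le_Apow (A : V → V → ℝ≥0∞) (o : V) (n : ℕ) (v : V) :
    fr A o (n + 1) v ≤ Apow A (n + 1) v o := by
  rw [Apow_succ_eq_sum_antidiagonal]
  refine le_trans ?_ (Finset.single_le_sum (fun _ _ => zero_le)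
    (show (n, 0) ∈ Finset.HasAntidiagonal.antidiagonal n by simp))
  simp [Apow]

/-- If the Green function at `o` is finite below `q` and infinite at `q`, then the first-return
generating function at `o` equals `1` at `q`. -/
theorem frSeries_self_eq_one {o : V} {q : ℝ≥0∞} (hA : ∀ n, Apow A n o o ≠ ⊤) (hq : q ≠ 0)
    (hlt : ∀ t < q, ∑' n, Apow A n o o * t ^ n ≠ ⊤) (htop : ∑' n, Apow A n o o * q ^ n = ⊤) :
    frSeries A o q o = 1 := by
  have hfr : ∀ n, fr A o (n + 1) o ≠ ⊤ := fun n =>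
    ne_top_of_le_ne_top (hA _) (fr_succ_le_Apow A o n o)
  refine le_antisymm (le_of_not_gt fun h => ?_) (le_of_not_gt fun h => ?_)
  · obtain ⟨t, htq, ht⟩ := exists_lt_lt_tsum_mul_pow hfr hq (fun n => n + 1) h
    have hG := hlt t htq
    have h1 := tsum_Apow_renewal A o t
    have h2 : (1 : ℝ≥0∞) ≤ frSeries A o t o := ht.le
    have h3 := ENNReal.lt_add_right hG one_ne_zero
    refine (h3.trans_le ?_).ne h1
    rw [add_comm]
    gcongr
    exact le_mul_of_one_le_left zero_le h2
  · have hc : (1 - frSeries A o q o)⁻¹ < ⊤ :=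
      ENNReal.inv_lt_top.mpr (tsub_pos_of_lt h)
    obtain ⟨t, htq, ht⟩ := exists_lt_lt_tsum_mul_pow hA hq id (hc.trans_eq htop.symm)
    have hG := hlt t htq
    simp only [id] at ht
    have hF : frSeries A o t o ≤ frSeries A o q o :=
      ENNReal.tsum_le_tsum fun n => by gcongr
    have h1 := tsum_Apow_renewal A o t
    set G := ∑' n, Apow A n o o * t ^ n
    have h2 : (1 - frSeries A o q o) * G ≤ 1 := by
      rw [ENNReal.sub_mul fun _ _ => hG, one_mul]
      refine tsub_le_iff_right.mpr ?_
      conv_lhs => rw [h1]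
      gcongr
    refine ht.not_ge ?_
    rw [ENNReal.le_inv_iff_mul_le, mul_comm]
    exact h2

/-- Superharmonic vectors dominate the first-return generating function. -/
theorem frSeries_mul_le {o : V} {q : ℝ≥0∞} {ξ : V → ℝ≥0∞}
    (hξ : ∀ v, q * ∑' w, A v w * ξ w ≤ ξ v) (v : V) : frSeries A o q v * ξ o ≤ ξ v := by
  rw [frSeries, ← ENNReal.tsum_mul_right, ENNReal.tsum_eq_iSup_nat]
  refine iSup_le fun N => ?_
  induction N generalizing v with
  | zero => simp
  | succ N ih =>
    refine le_trans ?_ (hξ v)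
    rw [Finset.sum_range_succ', ENNReal.tsum_eq_add_tsum_ite o, add_comm, mul_add]
    refine add_le_add (le_of_eq (by simp [fr]; ring)) ?_
    calc ∑ n ∈ Finset.range N, fr A o (n + 1 + 1) v * q ^ (n + 1 + 1) * ξ o
        = ∑ n ∈ Finset.range N,
          ∑' u, q * if u = o then 0 else A v u * (fr A o (n + 1) u * q ^ (n + 1) * ξ o) := by
          refine Finset.sum_congr rfl fun n _ => ?_
          change (∑' u, if u = o then 0 else A v u * fr A o (n + 1) u) * _ * _ = _
          rw [← ENNReal.tsum_mul_right, ← ENNReal.tsum_mul_right]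
          refine tsum_congr fun u => ?_
          split_ifs
          · simp
          · ring
      _ = q * ∑' u, if u = o then 0 else
          A v u * ∑ n ∈ Finset.range N, fr A o (n + 1) u * q ^ (n + 1) * ξ o := by
          rw [← Summable.tsum_finsetSum fun _ _ => ENNReal.summable, ← ENNReal.tsum_mul_left]
          refine tsum_congr fun u => ?_
          split_ifs
          · simp
          · rw [Finset.mul_sum, Finset.mul_sum]
      _ ≤ _ := by
          gcongr with u
          split_ifs
          · exact le_rfl
          · gcongr
            exact ih u

end FirstReturn

theorem tsum_mul_eq_sum_of_notMem_VInf {A : V → V → ℝ≥0∞} {v : V} (hv : v ∉ VInf A) :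
    ∃ s : Finset V, (∀ w ∈ s, A v w ≠ 0) ∧
      ∀ f : V → ℝ≥0∞, ∑' w, A v w * f w = ∑ w ∈ s, A v w * f w := by
  have hfin : {w | A v w ≠ 0}.Finite := Set.not_infinite.mp fun h => hv (Or.inr h)
  refine ⟨hfin.toFinset, fun w hw => by simpa using hw, fun f => tsum_eq_sum fun w hw => ?_⟩
  have : A v w = 0 := by simpa using hw
  simp [this]

/-- A vector equal to its image under the cofinal matrix `q A` and finite somewhere is finite
everywhere. -/
theorem ne_top_of_eq_mul_tsum {A : V → V → ℝ≥0∞} (hcof : Cofinal A)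
    (hA : ∀ v w, A v w ≠ ⊤) {q : ℝ≥0∞} (hq : q ≠ 0) (hq' : q ≠ ⊤) {F : V → ℝ≥0∞}
    (hF : ∀ v, F v = q * ∑' w, A v w * F w) {o : V} (ho : F o ≠ ⊤) (v : V) : F v ≠ ⊤ := by
  have h := hcof {v | F v ≠ ⊤} ?_ ?_
  · rcases h with h | h
    · exact absurd (show o ∈ {v | F v ≠ ⊤} from ho) (by simp [h])
    · exact (Set.eq_univ_iff_forall.mp h) v
  · intro v w hv hvw hw
    refine hv ?_
    rw [hF v, ENNReal.mul_eq_top]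
    exact Or.inl ⟨hq, top_le_iff.mp (le_trans (by simp [hw, hvw])
      (ENNReal.le_tsum (f := fun w => A v w * F w) w))⟩
  · intro v hv hw
    obtain ⟨s, hs, hsum⟩ := tsum_mul_eq_sum_of_notMem_VInf hv
    change F v ≠ ⊤
    rw [hF v, hsum]
    exact ENNReal.mul_ne_top hq' (ENNReal.sum_ne_top.mpr fun w hws =>
      ENNReal.mul_ne_top (hA v w) (hw w (hs w hws)))

/-- A superharmonic vector for a cofinal matrix that is harmonic off `V_∞` and vanishes somewhere
vanishes everywhere. -/
theorem eq_zero_of_superharmonic {A : V → V → ℝ≥0∞} (hcof : Cofinal A) {q : ℝ≥0∞}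
    (hq : q ≠ 0) {h : V → ℝ≥0∞} (hle : ∀ v, q * ∑' w, A v w * h w ≤ h v)
    (heq : ∀ v, v ∉ VInf A → q * ∑' w, A v w * h w = h v) {o : V} (ho : h o = 0) (v : V) :
    h v = 0 := by
  have H := hcof {v | h v = 0} ?_ ?_
  · rcases H with H | H
    · exact absurd (show o ∈ {v | h v = 0} from ho) (by simp [H])
    · exact (Set.eq_univ_iff_forall.mp H) v
  · intro v w hv hvw
    have h1 := hle v
    rw [show h v = 0 from hv, nonpos_iff_eq_zero, mul_eq_zero, or_iff_right hq,
      ENNReal.tsum_eq_zero] at h1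
    exact (mul_eq_zero.mp (h1 w)).resolve_left hvw
  · intro v hv hw
    change h v = 0
    rw [← heq v hv, ENNReal.tsum_eq_zero.mpr, mul_zero]
    intro w
    by_cases hvw : A v w = 0
    · simp [hvw]
    · simp [show h w = 0 from hw w hvw]

theorem expb_mul_expb_neg (β : ℝ) : expb β * expb (-β) = 1 := by
  rw [expb, expb, ← ENNReal.ofReal_mul (Real.exp_pos _).le, ← Real.exp_add]
  simp

theorem expn_eq_pow (β : ℝ) (n : ℕ) : expn β n = expb (-β) ^ n := by
  rw [expn, expb, ← ENNReal.ofReal_pow (Real.exp_pos _).le, ← Real.exp_nat_mul]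
  congr 2
  ring

/-- Under the standing assumptions, if `A` is recurrent then there is a
non-zero almost `β₀`-harmonic vector for `A`; it is unique up to multiplication by
non-negative scalars, and it is `β₀`-harmonic. -/
theorem stmt8 [Countable V] [DecidableEq V] (A : V → V → ℝ≥0∞)
    (hst : Standing A) (β₀ : ℝ)
    (hβ₀ : ∀ v ∈ NW A,
      Filter.limsup (fun n : ℕ => Apow A n v v ^ ((n : ℝ)⁻¹)) Filter.atTop = expb β₀)
    (hrec : ∃ v ∈ NW A, ∑' n : ℕ, Apow A n v v * expn β₀ n = ⊤) :
    ∃ ξ : V → ℝ≥0∞, (IsAlmostHarmonic A β₀ ξ ∧ ξ ≠ 0 ∧ IsHarmonic A β₀ ξ) ∧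
      ∀ ξ' : V → ℝ≥0∞, IsAlmostHarmonic A β₀ ξ' → ξ' ≠ 0 →
        ∃ c : ℝ≥0∞, c ≠ ⊤ ∧ ∀ v, ξ' v = c * ξ v := by
  obtain ⟨hcof, -, hfin, hpow⟩ := hst
  obtain ⟨o, hoNW, ho⟩ := hrec
  have hpq := expb_mul_expb_neg β₀
  set p := expb β₀
  set q := expb (-β₀)
  have hqp : q * p = 1 := by rw [mul_comm, hpq]
  have hq0 : q ≠ 0 := right_ne_zero_of_mul_eq_one hpq
  have hqt : q ≠ ⊤ := ENNReal.ofReal_ne_top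
  simp_rw [expn_eq_pow] at ho
  have hpinv : p = q⁻¹ := ENNReal.eq_inv_of_mul_eq_one_left hpq
  have hF1 : frSeries A o q o = 1 := by
    refine frSeries_self_eq_one (fun n => hpow n o o) hq0 (fun t ht => ?_) ho
    refine tsum_mul_pow_ne_top_of_limsup_lt (fun n => hpow n o o) ?_ ht.ne_top
    rw [hβ₀ o hoNW, hpinv]
    exact ENNReal.inv_lt_inv.mpr ht
  have hF : ∀ v, frSeries A o q v = q * ∑' w, A v w * frSeries A o q w := by
    intro v
    rw [ENNReal.tsum_eq_add_tsum_ite o, hF1, mul_one]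
    convert frSeries_eq A o q v
  have hFtop : ∀ v, frSeries A o q v ≠ ⊤ :=
    ne_top_of_eq_mul_tsum hcof hfin hq0 hqt hF (o := o) (by simp [hF1])
  have hharm : ∀ v, ∑' w, A v w * frSeries A o q w = p * frSeries A o q v := by
    intro v
    rw [hF v, ← mul_assoc, hpq, one_mul]
  refine ⟨frSeries A o q, ⟨⟨hFtop, fun v _ => hharm v, fun v _ => (hharm v).le⟩,
    fun h => by simp [h] at hF1, hFtop, hharm⟩, ?_⟩
  rintro ξ ⟨hξtop, hξeq, hξle⟩ -
  have heq : ∀ v, v ∉ VInf A → q * ∑' w, A v w * ξ w = ξ v := by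
    intro v hv
    rw [hξeq v hv, ← mul_assoc, hqp, one_mul]
  have hsuper : ∀ v, q * ∑' w, A v w * ξ w ≤ ξ v := by
    intro v
    by_cases hv : v ∈ VInf A
    · calc q * ∑' w, A v w * ξ w ≤ q * (p * ξ v) := by gcongr; exact hξle v hv
        _ = ξ v := by rw [← mul_assoc, hqp, one_mul]
    · exact (heq v hv).le
  have hdom := frSeries_mul_le (o := o) hsuper
  have hcfin : ∀ v, frSeries A o q v * ξ o ≠ ⊤ := fun v =>
    ENNReal.mul_ne_top (hFtop v) (hξtop o)
  set h : V → ℝ≥0∞ := fun v => ξ v - frSeries A o q v * ξ o with hh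
  have hadd : ∀ v, h v + frSeries A o q v * ξ o = ξ v := fun v => tsub_add_cancel_of_le (hdom v)
  have hsum : ∀ v, q * ∑' w, A v w * ξ w =
      q * ∑' w, A v w * h w + frSeries A o q v * ξ o := by
    intro v
    conv_rhs => rw [hF v]
    rw [mul_assoc, ← mul_add, ← ENNReal.tsum_mul_right, ← ENNReal.tsum_add]
    congr 1
    refine tsum_congr fun w => ?_
    rw [← hadd w]
    ring
  have hzero := eq_zero_of_superharmonic hcof hq0 (h := h) (o := o)
    (fun v => (ENNReal.add_le_add_iff_right (hcfin v)).mp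
      (by rw [← hsum, hadd]; exact hsuper v))
    (fun v hv => (ENNReal.add_left_inj (hcfin v)).mp (by rw [← hsum, hadd]; exact heq v hv))
    (by simp [hh, hF1])
  refine ⟨ξ o, hξtop o, fun v => ?_⟩
  rw [← hadd v, hzero v, zero_add, mul_comm]
end

section
/- Assume the standing assumptions and that A is recurrent. Then every almost β₀-harmonic vector for A is β₀-harmonic. -/
open scoped ENNReal
open Filter

variable {V : Type*}

/-- The saturation of a hereditary set adds no vertex of `V_∞`: in a cofinal graph every
vertex of `V_∞` is reachable from every vertex. -/
theorem Cofinal.reflTransGen_of_mem_VInf {A : V → V → ℝ≥0∞} (hA : Cofinal A) (v : V) {u : V}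
    (hu : u ∈ VInf A) : Relation.ReflTransGen (fun a b => A a b ≠ 0) v u := by
  let H : Set V := ⋂₀ {S | (∀ w, Relation.ReflTransGen (fun a b => A a b ≠ 0) v w → w ∈ S) ∧
    Saturated A S}
  have hreach : ∀ w, Relation.ReflTransGen (fun a b => A a b ≠ 0) v w → w ∈ H :=
    fun w hw S hS => hS.1 w hw
  have hsat : Saturated A H := fun w hw h S hS => hS.2 w hw fun x hx => h x hx S hS
  let K : Set V := {w | w ∈ H ∧ (∀ x, A w x ≠ 0 → x ∈ H) ∧
    (w ∈ VInf A → Relation.ReflTransGen (fun a b => A a b ≠ 0) v w)}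
  have hHK : H ⊆ K := by
    intro w hw
    refine hw K ⟨fun x hx => ⟨hreach x hx, fun y hy => hreach y (hx.tail hy), fun _ => hx⟩, ?_⟩
    intro x hx h
    exact ⟨hsat x hx fun y hy => (h y hy).1, fun y hy => (h y hy).1, fun h' => absurd h' hx⟩
  have huniv : H = Set.univ :=
    (hA H (fun _ x hw hx => (hHK hw).2.1 x hx) hsat).resolve_left
      (Set.Nonempty.ne_empty ⟨v, hreach v .refl⟩)
  exact (hHK (huniv ▸ Set.mem_univ u)).2.2 hu

theorem exists_Apow_ne_zero_of_reflTransGen [DecidableEq V] {A : V → V → ℝ≥0∞} {v u : V}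
    (h : Relation.ReflTransGen (fun a b => A a b ≠ 0) v u) : ∃ m, Apow A m v u ≠ 0 := by
  induction h using Relation.ReflTransGen.head_induction_on with
  | refl => exact ⟨0, by simp [Apow]⟩
  | @head a b hab _ ih =>
    obtain ⟨m, hm⟩ := ih
    refine ⟨m + 1, ?_⟩
    simp only [Apow, ne_eq, ENNReal.tsum_eq_zero, not_forall]
    exact ⟨b, mul_ne_zero hab hm⟩

theorem Apow_mul_Apow_le [DecidableEq V] (A : V → V → ℝ≥0∞) (n m : ℕ) (v w u : V) :
    Apow A n v w * Apow A m w u ≤ Apow A (n + m) v u := by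
  induction n generalizing v with
  | zero =>
    by_cases h : v = w
    · subst h; simp [Apow]
    · simp [Apow, h]
  | succ n ih =>
    rw [Nat.add_right_comm]
    simp only [Apow, ← ENNReal.tsum_mul_right, mul_assoc]
    exact ENNReal.tsum_le_tsum fun x => mul_le_mul_right (ih x) _

theorem expn_ne_zero (β : ℝ) (n : ℕ) : expn β n ≠ 0 := by simp [expn, Real.exp_pos]

theorem expn_add (β : ℝ) (n m : ℕ) : expn β (n + m) = expn β n * expn β m := by
  rw [expn, expn, expn, ← ENNReal.ofReal_mul (Real.exp_pos _).le, ← Real.exp_add]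
  push_cast
  ring_nf

theorem expn_one_mul_expb (β : ℝ) : expn β 1 * expb β = 1 := by
  rw [expn, expb, ← ENNReal.ofReal_mul (Real.exp_pos _).le, ← Real.exp_add]
  simp

/-- A superharmonic vector dominates the potential of its defect at a single vertex `u`. -/
theorem tsum_expn_mul_Apow_mul_le [DecidableEq V] {A : V → V → ℝ≥0∞} {β : ℝ}
    {ξ : V → ℝ≥0∞} {u : V} {d : ℝ≥0∞}
    (h : ∀ v, ∑' w, A v w * ξ w + (if v = u then d else 0) ≤ expb β * ξ v) (v : V) :
    ∑' n, expn β n * Apow A n v u * (expn β 1 * d) ≤ ξ v := by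
  refine ENNReal.tsum_le_of_sum_range_le fun N => ?_
  induction N generalizing v with
  | zero => simp
  | succ N ih =>
    have hstep : ∀ n, expn β (n + 1) * Apow A (n + 1) v u * (expn β 1 * d) =
        expn β 1 * ∑' x, A v x * (expn β n * Apow A n x u * (expn β 1 * d)) := fun n => by
      simp only [Apow, expn_add, ← ENNReal.tsum_mul_right, ← ENNReal.tsum_mul_left]
      exact tsum_congr fun x => by ring
    calc ∑ n ∈ Finset.range (N + 1), expn β n * Apow A n v u * (expn β 1 * d)
        = expn β 1 * (∑' x, A v x *
            ∑ n ∈ Finset.range N, expn β n * Apow A n x u * (expn β 1 * d) +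
            (if v = u then d else 0)) := by
          rw [Finset.sum_range_succ', Finset.sum_congr rfl fun n _ => hstep n,
            ← Finset.mul_sum, ← Summable.tsum_finsetSum fun _ _ => ENNReal.summable, mul_add]
          simp only [Finset.mul_sum]
          simp [expn_zero, Apow]
      _ ≤ expn β 1 * (∑' x, A v x * ξ x + (if v = u then d else 0)) := by
          gcongr with x
          exact ih x
      _ ≤ expn β 1 * (expb β * ξ v) := by gcongr; exact h v
      _ = ξ v := by rw [← mul_assoc, expn_one_mul_expb, one_mul]

theorem tsum_expn_mul_Apow_eq_top [DecidableEq V] {A : V → V → ℝ≥0∞} {β : ℝ} {v u : V}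
    (hv : ∑' n, Apow A n v v * expn β n = ⊤)
    (h : Relation.ReflTransGen (fun a b => A a b ≠ 0) v u) :
    ∑' n, expn β n * Apow A n v u = ⊤ := by
  obtain ⟨m, hm⟩ := exists_Apow_ne_zero_of_reflTransGen h
  refine top_le_iff.mp ?_
  calc ⊤ = (∑' n, Apow A n v v * expn β n) * (Apow A m v u * expn β m) := by
        rw [hv, ENNReal.top_mul (mul_ne_zero hm (expn_ne_zero β m))]
    _ ≤ ∑' n, expn β (n + m) * Apow A (n + m) v u := by
        rw [← ENNReal.tsum_mul_right]
        refine ENNReal.tsum_le_tsum fun n => ?_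
        rw [expn_add]
        calc _ = expn β n * expn β m * (Apow A n v v * Apow A m v u) := by ring
          _ ≤ _ := by gcongr; exact Apow_mul_Apow_le A n m v v u
    _ ≤ ∑' n, expn β n * Apow A n v u :=
        ENNReal.tsum_comp_le_tsum_of_injective (add_left_injective m)
          fun n => expn β n * Apow A n v u

/-- Under the standing assumptions, if `A` is recurrent then every almost
`β₀`-harmonic vector for `A` is `β₀`-harmonic. -/
theorem stmt11 [Countable V] [DecidableEq V] (A : V → V → ℝ≥0∞)
    (hst : Standing A) (β₀ : ℝ)
    (hβ₀ : ∀ v ∈ NW A,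
      Filter.limsup (fun n : ℕ => Apow A n v v ^ ((n : ℝ)⁻¹)) Filter.atTop = expb β₀)
    (hrec : ∃ v ∈ NW A, ∑' n : ℕ, Apow A n v v * expn β₀ n = ⊤) :
    ∀ ξ : V → ℝ≥0∞, IsAlmostHarmonic A β₀ ξ → IsHarmonic A β₀ ξ := by
  intro ξ ⟨hfin, heq, hle⟩
  refine ⟨hfin, fun u => ?_⟩
  by_cases hu : u ∈ VInf A
  swap
  · exact heq u hu
  by_contra hne
  have hd : expb β₀ * ξ u - ∑' w, A u w * ξ w ≠ 0 :=
    (tsub_pos_of_lt (lt_of_le_of_ne (hle u hu) hne)).ne'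
  obtain ⟨v, -, hv⟩ := hrec
  refine hfin v (top_le_iff.mp ?_)
  have hsuper : ∀ w, ∑' x, A w x * ξ x +
      (if w = u then expb β₀ * ξ u - ∑' w, A u w * ξ w else 0) ≤ expb β₀ * ξ w := by
    intro w
    split_ifs with h
    · subst h
      exact (add_tsub_cancel_of_le (hle w hu)).le
    · rw [add_zero]
      by_cases hw : w ∈ VInf A
      · exact hle w hw
      · exact (heq w hw).le
  refine le_of_eq_of_le ?_ (tsum_expn_mul_Apow_mul_le hsuper v)
  rw [ENNReal.tsum_mul_right,
    tsum_expn_mul_Apow_eq_top hv (hst.1.reflTransGen_of_mem_VInf v hu),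
    ENNReal.top_mul (mul_ne_zero (expn_ne_zero β₀ 1) hd)]
end
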